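/- arXiv:2602.03756 — 2 statements merged into one kernel-verified Lean document; each statement's English description precedes it below -/
import Mathlib

section
/- Fix n ≥ 1 data points with observed times t_i > 0 and censoring indicators δ_i ∈ ℝ (i = 1,…,n), time-level covariate vectors x̃_i ∈ ℝ^p and hazard-level covariate vectors x_i ∈ ℝ^q. Let f, f', f'', F : ℝ → ℝ satisfy: for all x, HasDerivAt f (f' x) x, HasDerivAt f' (f'' x) x, and HasDerivAt F (f x) x, and f(−x) = f(x) for all x. Fix ν ∈ ℝ, θ ∈ ℝ^p, η ∈ ℝ^q, and set u_i(θ₀) = e^ν log t_i − x̃_iᵀθ − θ₀ and v_i = exp(e^{−ν} x̃_iᵀθ − x_iᵀη). Assume f(u_i(θ₀)) > 0 and F(−u_i(θ₀)) > 0 for all θ₀ ∈ ℝ and all i. Then the second derivative of the map θ₀ ↦ ℓ(ν, θ₀, θ, η) at any θ₀ equals Σ_i δ_i [f''(u_i)/f(u_i) − (f'(u_i)/f(u_i))²] − Σ_i [f'(u_i)/F(−u_i) + (f(u_i)/F(−u_i))²] (v_i − δ_i), where u_i = u_i(θ₀). -/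
open Real

/-- The second derivative of the GH log-likelihood with respect to `θ₀` equals
`∑ δᵢ [f''(uᵢ)/f(uᵢ) - (f'(uᵢ)/f(uᵢ))²] - ∑ [f'(uᵢ)/F(-uᵢ) + (f(uᵢ)/F(-uᵢ))²](vᵢ - δᵢ)`. -/
theorem GH_loglik_deriv2_theta0
    (n p q : ℕ) (hn : 1 ≤ n)
    (t δ : Fin n → ℝ) (ht : ∀ i, 0 < t i)
    (xt : Fin n → Fin p → ℝ) (x : Fin n → Fin q → ℝ)
    (f f' f'' F : ℝ → ℝ)
    (hf : ∀ s, HasDerivAt f (f' s) s) (hf' : ∀ s, HasDerivAt f' (f'' s) s)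
    (hF : ∀ s, HasDerivAt F (f s) s)
    (hfsym : ∀ s, f (-s) = f s)
    (ν : ℝ) (θ : Fin p → ℝ) (η : Fin q → ℝ)
    (v : Fin n → ℝ)
    (hv : ∀ i, v i = Real.exp (Real.exp (-ν) * (∑ j, xt i j * θ j) - (∑ j, x i j * η j)))
    (hfu : ∀ (s : ℝ) (i : Fin n),
      0 < f (Real.exp ν * Real.log (t i) - (∑ j, xt i j * θ j) - s))
    (hFu : ∀ (s : ℝ) (i : Fin n),
      0 < F (-(Real.exp ν * Real.log (t i) - (∑ j, xt i j * θ j) - s)))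
    (θ₀ : ℝ) (u : Fin n → ℝ)
    (hu : ∀ i, u i = Real.exp ν * Real.log (t i) - (∑ j, xt i j * θ j) - θ₀) :
    deriv (deriv
      (fun s : ℝ =>
        (∑ i, δ i) * ν - (∑ i, δ i * Real.log (t i))
        + (∑ i, δ i * ((∑ j, xt i j * θ j) * Real.exp (-ν) - (∑ j, x i j * η j)))
        + (∑ i, δ i * Real.log (f (Real.exp ν * Real.log (t i) - (∑ j, xt i j * θ j) - s)))
        + (∑ i, Real.log (F (-(Real.exp ν * Real.log (t i) - (∑ j, xt i j * θ j) - s)))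
            * (v i - δ i)))) θ₀
    =
    (∑ i, δ i * (f'' (u i) / f (u i) - (f' (u i) / f (u i)) ^ 2))
      - (∑ i, (f' (u i) / F (-u i) + (f (u i) / F (-u i)) ^ 2) * (v i - δ i)) := by
  obtain ⟨c, hc⟩ : ∃ c : Fin n → ℝ,
      ∀ i, Real.exp ν * Real.log (t i) - (∑ j, xt i j * θ j) = c i := ⟨_, fun _ => rfl⟩
  simp only [hc] at hfu hFu hu ⊢
  have hl : ∀ (i : Fin n) (s : ℝ), HasDerivAt (fun s => c i - s) (-1) s := fun i s => by
    simpa using (hasDerivAt_id s).const_sub (c i)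
  have hfl : ∀ (i : Fin n) (s : ℝ), HasDerivAt (fun s => f (c i - s)) (-f' (c i - s)) s :=
    fun i s => by simpa [Function.comp_def] using (hf (c i - s)).comp s (hl i s)
  have hfl' : ∀ (i : Fin n) (s : ℝ), HasDerivAt (fun s => f' (c i - s)) (-f'' (c i - s)) s :=
    fun i s => by simpa [Function.comp_def] using (hf' (c i - s)).comp s (hl i s)
  have hFl : ∀ (i : Fin n) (s : ℝ), HasDerivAt (fun s => F (-(c i - s))) (f (c i - s)) s :=
    fun i s => by
      have h := (hF (-(c i - s))).comp s (hl i s).neg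
      rw [hfsym] at h
      simpa [Function.comp_def] using h
  have h1 : ∀ K s : ℝ, HasDerivAt (fun s : ℝ => K
        + (∑ i, δ i * Real.log (f (c i - s)))
        + (∑ i, Real.log (F (-(c i - s))) * (v i - δ i)))
      ((∑ i, δ i * (-f' (c i - s) / f (c i - s)))
        + ∑ i, f (c i - s) / F (-(c i - s)) * (v i - δ i)) s := fun K s => by
    refine HasDerivAt.add (HasDerivAt.const_add K ?_) ?_
    · exact HasDerivAt.fun_sum fun i _ => ((hfl i s).log (hfu s i).ne').const_mul _
    · exact HasDerivAt.fun_sum fun i _ => ((hFl i s).log (hFu s i).ne').mul_const _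
  have h1' := fun K : ℝ => deriv_eq (h1 K)
  rw [h1']
  have h2 : HasDerivAt (fun s : ℝ => (∑ i, δ i * (-f' (c i - s) / f (c i - s)))
        + ∑ i, f (c i - s) / F (-(c i - s)) * (v i - δ i)) _ θ₀ :=
    HasDerivAt.add
      (HasDerivAt.fun_sum fun i _ =>
        (((hfl' i θ₀).fun_neg.fun_div (hfl i θ₀) (hfu θ₀ i).ne').const_mul (δ i)))
      (HasDerivAt.fun_sum fun i _ =>
        (((hfl i θ₀).fun_div (hFl i θ₀) (hFu θ₀ i).ne').mul_const (v i - δ i)))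
  rw [h2.deriv, sub_eq_add_neg, ← Finset.sum_neg_distrib]
  congr 1 <;> refine Finset.sum_congr rfl fun i _ => ?_
  · have := (hfu θ₀ i).ne'
    rw [hu]
    field_simp
  · have := (hFu θ₀ i).ne'
    rw [hu]
    generalize F (-(c i - θ₀)) = G at *
    field_simp
    ring
end

section
/- Fix n ≥ 1 data points with observed times t_i > 0 and censoring indicators δ_i ∈ ℝ (i = 1,…,n), time-level covariate vectors x̃_i ∈ ℝ^p and hazard-level covariate vectors x_i ∈ ℝ^q. Let f, F : ℝ → ℝ and fix ν, θ₀ ∈ ℝ, θ ∈ ℝ^p; set u_i = e^ν log t_i − x̃_iᵀθ − θ₀ and, for η ∈ ℝ^q, v_i(η) = exp(e^{−ν} x̃_iᵀθ − x_iᵀη). Assume F(−u_i) > 0 for all i. Then for all coordinates j, k ∈ {1,…,q}, the second partial derivative ∂²ℓ/∂η_j∂η_k of the map η ↦ ℓ(ν, θ₀, θ, η) at any η equals Σ_i log F(−u_i) · v_i(η) · x_{ij} x_{ik}, where x_{ij} denotes the j-th coordinate of x_i. -/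
open Real

theorem GH_aux_lin {q : ℕ} (a y : Fin q → ℝ) (k : Fin q) (r₀ : ℝ) :
    HasDerivAt (fun r : ℝ => ∑ l, a l * Function.update y k r l) (a k) r₀ := by
  have h : (fun r : ℝ => ∑ l, a l * Function.update y k r l)
      = fun r : ℝ => a k * r + ∑ l ∈ Finset.univ.erase k, a l * y l := by
    funext r
    rw [← Finset.add_sum_erase _ _ (Finset.mem_univ k)]
    congr 1
    · simp
    · refine Finset.sum_congr rfl fun l hl => ?_
      rw [Function.update_of_ne (Finset.ne_of_mem_erase hl)]
  rw [h]
  exact (((hasDerivAt_id' r₀).const_mul (a k)).add_const _).congr_deriv (mul_one _)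

/-- The second partial derivative `∂²ℓ/∂ηⱼ∂ηₖ` of the GH log-likelihood with
respect to the hazard-level coefficients equals
`∑ log F(-uᵢ) · vᵢ(η) · xᵢⱼ xᵢₖ`. -/
theorem GH_loglik_deriv2_eta
    (n p q : ℕ) (hn : 1 ≤ n)
    (t δ : Fin n → ℝ) (ht : ∀ i, 0 < t i)
    (xt : Fin n → Fin p → ℝ) (x : Fin n → Fin q → ℝ)
    (f F : ℝ → ℝ)
    (ν θ₀ : ℝ) (θ : Fin p → ℝ)
    (u : Fin n → ℝ)
    (hu : ∀ i, u i = Real.exp ν * Real.log (t i) - (∑ l, xt i l * θ l) - θ₀)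
    (hFu : ∀ i, 0 < F (-u i))
    (η : Fin q → ℝ) (j k : Fin q) :
    deriv (fun s : ℝ =>
      deriv (fun r : ℝ =>
        (fun η' : Fin q → ℝ =>
          (∑ i, δ i) * ν - (∑ i, δ i * Real.log (t i))
          + (∑ i, δ i * ((∑ l, xt i l * θ l) * Real.exp (-ν) - (∑ l, x i l * η' l)))
          + (∑ i, δ i * Real.log (f (u i)))
          + (∑ i, Real.log (F (-u i))
              * (Real.exp (Real.exp (-ν) * (∑ l, xt i l * θ l) - (∑ l, x i l * η' l))
                  - δ i)))
          (Function.update (Function.update η j s) k r))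
        (Function.update η j s k)) (η j)
    =
    ∑ i, Real.log (F (-u i))
      * Real.exp (Real.exp (-ν) * (∑ l, xt i l * θ l) - (∑ l, x i l * η l))
      * (x i j * x i k) := by
  have inner : ∀ s : ℝ, deriv (fun r : ℝ =>
        (fun η' : Fin q → ℝ =>
          (∑ i, δ i) * ν - (∑ i, δ i * Real.log (t i))
          + (∑ i, δ i * ((∑ l, xt i l * θ l) * Real.exp (-ν) - (∑ l, x i l * η' l)))
          + (∑ i, δ i * Real.log (f (u i)))
          + (∑ i, Real.log (F (-u i))
              * (Real.exp (Real.exp (-ν) * (∑ l, xt i l * θ l) - (∑ l, x i l * η' l))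
                  - δ i)))
          (Function.update (Function.update η j s) k r))
        (Function.update η j s k)
      = (∑ i, δ i * (-(x i k))) + ∑ i, Real.log (F (-u i))
        * (Real.exp (Real.exp (-ν) * (∑ l, xt i l * θ l)
            - (∑ l, x i l * Function.update η j s l)) * (-(x i k))) := by
    intro s
    have h1 : ∀ i, HasDerivAt (fun r : ℝ => δ i * ((∑ l, xt i l * θ l) * Real.exp (-ν)
        - (∑ l, x i l * Function.update (Function.update η j s) k r l)))
        (δ i * (-(x i k))) (Function.update η j s k) := fun i =>
      ((GH_aux_lin (x i) (Function.update η j s) k _).const_sub _).const_mul _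
    have h2 : ∀ i, HasDerivAt (fun r : ℝ => Real.log (F (-u i))
        * (Real.exp (Real.exp (-ν) * (∑ l, xt i l * θ l)
          - (∑ l, x i l * Function.update (Function.update η j s) k r l)) - δ i))
        (Real.log (F (-u i)) * (Real.exp (Real.exp (-ν) * (∑ l, xt i l * θ l)
            - (∑ l, x i l * Function.update η j s l)) * (-(x i k))))
        (Function.update η j s k) := fun i => by
      have := ((((GH_aux_lin (x i) (Function.update η j s) k
        (Function.update η j s k)).const_sub (Real.exp (-ν) * (∑ l, xt i l * θ l))).exp).sub_const
          (δ i)).const_mul (Real.log (F (-u i)))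
      rwa [Function.update_eq_self k (Function.update η j s)] at this
    exact ((((HasDerivAt.fun_sum fun i _ => h1 i).const_add _).add_const _).add
      (HasDerivAt.fun_sum fun i _ => h2 i)).deriv
  rw [funext inner]
  have h3 : ∀ i, HasDerivAt (fun s : ℝ => Real.log (F (-u i))
        * (Real.exp (Real.exp (-ν) * (∑ l, xt i l * θ l)
            - (∑ l, x i l * Function.update η j s l)) * (-(x i k))))
        (Real.log (F (-u i))
      * Real.exp (Real.exp (-ν) * (∑ l, xt i l * θ l) - (∑ l, x i l * η l))
      * (x i j * x i k)) (η j) := fun i => by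
    have := ((((GH_aux_lin (x i) η j (η j)).const_sub
      (Real.exp (-ν) * (∑ l, xt i l * θ l))).exp).mul_const
          (-(x i k))).const_mul (Real.log (F (-u i)))
    rw [Function.update_eq_self j η] at this
    exact this.congr_deriv (by ring)
  exact ((HasDerivAt.fun_sum fun i _ => h3 i).const_add _).deriv
end
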